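/- Let σ = {b_{1}, b_{j_2}, …, b_k} ⊆ B with subscripts 1 < j_2 < … < k ≤ m, such that σ is not contained in B_s for any s ∈ {1,…,m}. Assume j_2 ≤ d+1 and k = j_2 + m − d − 1. Then for every i ∈ {j_2+1,…,d+1} with b_i ∉ σ, the set (σ ∪ {b_i}) \ {b_{j_2}} is not contained in B_s for any s ∈ {1,…,m}. -/

import Mathlib

open Finset

/-- The graph `G_m^d` on vertex set `Fin m ⊕ Fin m` (0-based indexing):
`Sum.inl i` is the vertex `a_{i+1}` and `Sum.inr j` is the vertex `b_{j+1}` of the paper;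
`a_i` is adjacent to `b_j` iff `(j - i) mod m ∈ {0, …, d-1}`. -/
def Gmd (m d : ℕ) : SimpleGraph (Fin m ⊕ Fin m) :=
  SimpleGraph.fromRel (fun u v =>
    ∃ i j : Fin m, u = Sum.inl i ∧ v = Sum.inr j ∧ (j.val + m - i.val) % m < d)

/-- A finite set of vertices is independent iff no two of its elements are adjacent. -/
def IsInd (m d : ℕ) (σ : Finset (Fin m ⊕ Fin m)) : Prop :=
  ∀ u ∈ σ, ∀ v ∈ σ, ¬ (Gmd m d).Adj u v

/-- The face poset `P` of the independence complex `Ind (G_m^d)` (ordered by `⊆`),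
including the empty simplex. -/
def faceP (m d : ℕ) : Set (Finset (Fin m ⊕ Fin m)) := {σ | IsInd m d σ}

/-- One step of the matching construction: `S_x(T) = {σ ∈ T | x ∉ σ, σ ∪ {x} ∈ T}`. -/
def stepS {α : Type*} [DecidableEq α] (x : α) (T : Set (Finset α)) : Set (Finset α) :=
  {σ | σ ∈ T ∧ x ∉ σ ∧ insert x σ ∈ T}

/-- The survivors of one step: `T \ (S_x(T) ∪ μ_x(S_x(T)))`. -/
def stepSurv {α : Type*} [DecidableEq α] (x : α) (T : Set (Finset α)) : Set (Finset α) :=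
  T \ (stepS x T ∪ (insert x) '' (stepS x T))

/-- Iterating the matching construction along a list of vertices. -/
def phase {α : Type*} [DecidableEq α] (T : Set (Finset α)) (l : List α) : Set (Finset α) :=
  l.foldl (fun T x => stepSurv x T) T

/-- The list `a_1, …, a_m`. -/
def listA (m : ℕ) : List (Fin m ⊕ Fin m) := (List.finRange m).map Sum.inl
/-- The list `b_1, …, b_m`. -/
def listB (m : ℕ) : List (Fin m ⊕ Fin m) := (List.finRange m).map Sum.inr

/-- `S_{a_{i+1}}` (0-based `i`): the set matched with `a_{i+1}` at stage `i+1` of phase one. -/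
def Sa (m d : ℕ) (i : Fin m) : Set (Finset (Fin m ⊕ Fin m)) :=
  stepS (Sum.inl i) (phase (faceP m d) ((listA m).take i.val))

/-- `M = P \ (S_1 ∪ μ_1(S_1))`, the simplices surviving phase one. -/
def setM (m d : ℕ) : Set (Finset (Fin m ⊕ Fin m)) := phase (faceP m d) (listA m)

/-- `S_{b_{i+1}}` (0-based `i`): the set matched with `b_{i+1}` at stage `i+1` of phase two. -/
def Sb (m d : ℕ) (i : Fin m) : Set (Finset (Fin m ⊕ Fin m)) :=
  stepS (Sum.inr i) (phase (setM m d) ((listB m).take i.val))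

/-- `𝒮_{a_{i+1}} = S_{a_{i+1}} ∪ μ_{a_{i+1}}(S_{a_{i+1}})`. -/
def scriptSa (m d : ℕ) (i : Fin m) : Set (Finset (Fin m ⊕ Fin m)) :=
  Sa m d i ∪ (insert (Sum.inl i)) '' (Sa m d i)

/-- `𝒮_{b_{i+1}} = S_{b_{i+1}} ∪ μ_{b_{i+1}}(S_{b_{i+1}})`. -/
def scriptSb (m d : ℕ) (i : Fin m) : Set (Finset (Fin m ⊕ Fin m)) :=
  Sb m d i ∪ (insert (Sum.inr i)) '' (Sb m d i)

/-- The critical cells `C = P \ (S ∪ μ(S))`. -/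
def setC (m d : ℕ) : Set (Finset (Fin m ⊕ Fin m)) :=
  faceP m d \ ((⋃ i : Fin m, scriptSa m d i) ∪ (⋃ i : Fin m, scriptSb m d i))

/-- The matching relation: `MatchRel σ τ` iff `τ = μ(σ)` for `σ ∈ S = S_1 ∪ S_2`. -/
def MatchRel (m d : ℕ) (σ τ : Finset (Fin m ⊕ Fin m)) : Prop :=
  (∃ i : Fin m, σ ∈ Sa m d i ∧ τ = insert (Sum.inl i) σ) ∨
  (∃ i : Fin m, σ ∈ Sb m d i ∧ τ = insert (Sum.inr i) σ)

/-- `B_{s+1} = {b_{s+1}, b_{s+2}, …, b_{s+m-d}}` (0-based `s`, subscripts mod `m`). -/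
def Bset (m d : ℕ) (s : Fin m) : Finset (Fin m ⊕ Fin m) :=
  (Finset.univ.filter (fun j : Fin m => (j.val + m - s.val) % m < m - d)).image Sum.inr

/-- `b_{n+1} ∈ σ` (0-based subscript `n`). -/
def hasB (m : ℕ) (σ : Finset (Fin m ⊕ Fin m)) (n : ℕ) : Prop :=
  ∃ j : Fin m, j.val = n ∧ Sum.inr j ∈ σ

/-- `σ ⊆ B`. -/
def onlyB (m : ℕ) (σ : Finset (Fin m ⊕ Fin m)) : Prop :=
  ∀ v ∈ σ, ∃ j : Fin m, v = Sum.inr j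

/-- Property `P_l` of the paper, with parameter `j1` (0-based: the paper's `j_1 - 1`, so
`1 ≤ j1 ≤ d`).  With 0-based subscripts `i_r = (r-1)(d+1)`, `j_r = j1 + (r-1)(d+1)` and
`k = m + j1 - (d+1)`:  σ ∈ M, σ ⊆ B, the `2l` smallest subscripts of σ are exactly
`0 = i_1, j_1, i_2, j_2, …, i_l, j_l`, the largest subscript is `k`, and
`σ \ {b_{i_r}} ∉ M`, `σ \ {b_{j_r}} ∉ M` for all `1 ≤ r ≤ l`. -/
def propP (m d l j1 : ℕ) (σ : Finset (Fin m ⊕ Fin m)) : Prop :=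
  σ ∈ setM m d ∧ onlyB m σ ∧ 1 ≤ j1 ∧ j1 ≤ d ∧
  (∀ r, 1 ≤ r → r ≤ l → hasB m σ ((r-1)*(d+1)) ∧ hasB m σ (j1 + (r-1)*(d+1))) ∧
  (∀ j : Fin m, Sum.inr j ∈ σ → j.val ≤ j1 + (l-1)*(d+1) →
      ∃ r, 1 ≤ r ∧ r ≤ l ∧ (j.val = (r-1)*(d+1) ∨ j.val = j1 + (r-1)*(d+1))) ∧
  hasB m σ (m + j1 - (d+1)) ∧
  (∀ j : Fin m, Sum.inr j ∈ σ → j.val ≤ m + j1 - (d+1)) ∧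
  (∀ r, 1 ≤ r → r ≤ l → ∀ j : Fin m,
      (j.val = (r-1)*(d+1) ∨ j.val = j1 + (r-1)*(d+1)) → σ.erase (Sum.inr j) ∉ setM m d)

theorem inr_mem_Bset {m d : ℕ} {s j : Fin m} :
    Sum.inr j ∈ Bset m d s ↔ (j.val + m - s.val) % m < m - d := by
  simp [Bset]

theorem inr_mem_Bset_iff_add_lt {m d : ℕ} {s j : Fin m} :
    Sum.inr j ∈ Bset m d s ↔ j.val + d < s.val ∨ s.val ≤ j.val ∧ j.val + d < s.val + m := by
  rw [inr_mem_Bset]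
  rcases lt_or_ge j.val s.val with hjs | hsj
  · rw [Nat.mod_eq_of_lt (by omega)]
    omega
  · rw [Nat.sub_add_comm hsj, Nat.add_mod_right, Nat.mod_eq_of_lt (by omega)]
    omega

-- The complement of `B_s` is a block of `d` cyclically consecutive subscripts, which is too long
-- to fit strictly between `z` and `i`.
theorem inr_mem_Bset_of_le_of_le {m d : ℕ} {s z j i : Fin m} (hzj : z ≤ j) (hji : j ≤ i)
    (hiz : i.val ≤ z.val + d) (hz : Sum.inr z ∈ Bset m d s) (hi : Sum.inr i ∈ Bset m d s) :
    Sum.inr j ∈ Bset m d s := by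
  rw [inr_mem_Bset_iff_add_lt] at hz hi ⊢
  omega

theorem subset_Bset_of_erase_insert_subset {m d : ℕ} {σ : Finset (Fin m ⊕ Fin m)}
    {s z j i : Fin m} (hz : Sum.inr z ∈ σ) (hzj : z < j) (hji : j < i) (hiz : i.val ≤ z.val + d)
    (hsub : (insert (Sum.inr i) σ).erase (Sum.inr j) ⊆ Bset m d s) : σ ⊆ Bset m d s := by
  have hzs : Sum.inr z ∈ Bset m d s :=
    hsub (mem_erase_of_ne_of_mem (Sum.inr_injective.ne hzj.ne) (mem_insert_of_mem hz))
  have his : Sum.inr i ∈ Bset m d s :=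
    hsub (mem_erase_of_ne_of_mem (Sum.inr_injective.ne hji.ne') (mem_insert_self _ _))
  have hjs : Sum.inr j ∈ Bset m d s := inr_mem_Bset_of_le_of_le hzj.le hji.le hiz hzs his
  exact (subset_insert _ _).trans ((erase_subset_iff_of_mem hjs).1 hsub)

theorem stmt8_general {m d : ℕ} {σ : Finset (Fin m ⊕ Fin m)} (hM : ∀ s : Fin m, ¬ σ ⊆ Bset m d s)
    {z j i : Fin m} (hz : Sum.inr z ∈ σ) (hzj : z < j) (hji : j < i) (hiz : i.val ≤ z.val + d)
    (s : Fin m) : ¬ (insert (Sum.inr i) σ).erase (Sum.inr j) ⊆ Bset m d s :=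
  fun hsub => hM s (subset_Bset_of_erase_insert_subset hz hzj hji hiz hsub)

/-- 0-based indices: let `σ = {b_0, b_{j2}, …, b_k} ⊆ B` (with `0 < j2` the
second-smallest and `k` the largest subscript) be contained in no `B_s`; assume `j2 ≤ d` and
`k = j2 + m - d - 1`.  Then for every `i ∈ {j2+1, …, d}` with `b_i ∉ σ`, the set
`(σ ∪ {b_i}) \ {b_{j2}}` is contained in no `B_s`. -/
theorem stmt8 (m d : ℕ) (hd : 1 ≤ d) (hdm : d ≤ m)
    (σ : Finset (Fin m ⊕ Fin m)) (hB : onlyB m σ) (j2 k : ℕ)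
    (h0 : hasB m σ 0)
    (hj2mem : hasB m σ j2) (hj2pos : 0 < j2)
    (hj2min : ∀ j : Fin m, Sum.inr j ∈ σ → j.val = 0 ∨ j2 ≤ j.val)
    (hkmem : hasB m σ k)
    (hkmax : ∀ j : Fin m, Sum.inr j ∈ σ → j.val ≤ k)
    (hM : ∀ s : Fin m, ¬ σ ⊆ Bset m d s)
    (hj2d : j2 ≤ d) (hk : k = j2 + m - d - 1) :
    ∀ i : Fin m, j2 < i.val → i.val ≤ d → Sum.inr i ∉ σ →
      ∀ jj : Fin m, jj.val = j2 →
        ∀ s : Fin m, ¬ (insert (Sum.inr i) σ).erase (Sum.inr jj) ⊆ Bset m d s := by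
  obtain ⟨z, hz, hzσ⟩ := h0
  exact fun i hji hid _ j hj => stmt8_general hM hzσ (by omega) (by omega) (by omega)
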